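/- Let ε be any function from the (finite) set P^{h,cf}_d(K_{2d}) of homogeneous cycle-free edge d-partitions of K_{2d} to k, and define D_ε(A) = Σ_{Γ ∈ P^{h,cf}_d(K_{2d})} ε(Γ)·M_Γ(A) for d×d(2d-1) matrices A. Then for every S^2-lower triangular d×d(2d-1) matrix A one has D_ε(A) = D_ε(I^{S^2}_d) · ∏_{1 ≤ i < j ≤ 2d} A^{ind(i,j)}_{i,j}; that is, D_ε(A) equals D_ε(I^{S^2}_d) times the product of the S^2-diagonal of A. -/

import Mathlib

open SimpleGraph

/-- Vertices of `K_{2d}` are `Fin (2*d)`, with `v : Fin (2*d)` representing the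
1-based vertex `v + 1`.  For `i < j`, `indF i j` is the 0-based version of the index
`ind(i+1, j+1)`, where (1-based) `ind(x,y) = ⌈x/2⌉` if `x + y` is even and `⌈y/2⌉` if
`x + y` is odd. -/
def indF {d : ℕ} (i j : Fin (2*d)) : Fin d :=
  if ((i : ℕ) + (j : ℕ)) % 2 = 0 then ⟨(i : ℕ) / 2, by have := i.isLt; omega⟩
  else ⟨(j : ℕ) / 2, by have := j.isLt; omega⟩

/-- Column indices of a `d × d(2d-1)` matrix: pairs `(i,j)` with `i < j` in `Fin (2*d)`. -/
abbrev EdgePair (d : ℕ) := {p : Fin (2*d) × Fin (2*d) // p.1 < p.2}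

def ind {d : ℕ} (e : EdgePair d) : Fin d := indF e.val.1 e.val.2

/-- An edge `d`-partition of `K_{2d}`: spanning subgraphs with pairwise disjoint edge
sets whose union is the edge set of the complete graph. -/
def IsEdgePartition {d : ℕ} (Γ : Fin d → SimpleGraph (Fin (2*d))) : Prop :=
  (∀ a b : Fin d, a ≠ b → Disjoint (Γ a).edgeSet (Γ b).edgeSet) ∧
  (⋃ a : Fin d, (Γ a).edgeSet) = (⊤ : SimpleGraph (Fin (2*d))).edgeSet

/-- A homogeneous cycle-free edge `d`-partition of `K_{2d}`. -/
def IsHCFPartition {d : ℕ} (Γ : Fin d → SimpleGraph (Fin (2*d))) : Prop :=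
  IsEdgePartition Γ ∧ (∀ a b : Fin d, (Γ a).edgeSet.ncard = (Γ b).edgeSet.ncard) ∧
  (∀ a : Fin d, (Γ a).IsAcyclic)

/-- The edge `d`-partition `Γ^E` associated with `E^{(2)}_d`:
`E(Γ^E_a) = {(i,j) : i < j, ind(i,j) = a}`. -/
def GammaE (d : ℕ) (a : Fin d) : SimpleGraph (Fin (2*d)) :=
  SimpleGraph.fromEdgeSet {e | ∃ i j : Fin (2*d), i < j ∧ indF i j = a ∧ e = s(i,j)}

-- The monomial `M_Γ(A) = ∏_{a=1}^d ∏_{(i,j) ∈ E(Γ_a)} A^a_{i,j}`.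
open scoped Classical in
noncomputable def MGamma {d : ℕ} {k : Type*} [Field k]
    (Γ : Fin d → SimpleGraph (Fin (2*d))) (A : Fin d → EdgePair d → k) : k :=
  ∏ a : Fin d, ∏ e : EdgePair d, if (Γ a).Adj e.val.1 e.val.2 then A a e else 1

/-- `A` is `S²`-upper triangular: entries strictly below the `S²`-diagonal vanish. -/
def S2UpperTriangular {d : ℕ} {k : Type*} [Field k] (A : Fin d → EdgePair d → k) : Prop :=
  ∀ (r : Fin d) (e : EdgePair d), ind e < r → A r e = 0

/-- `A` is `S²`-lower triangular: entries strictly above the `S²`-diagonal vanish. -/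
def S2LowerTriangular {d : ℕ} {k : Type*} [Field k] (A : Fin d → EdgePair d → k) : Prop :=
  ∀ (r : Fin d) (e : EdgePair d), r < ind e → A r e = 0

/-- The matrix form `I^{S²}_d` of `E^{(2)}_d`. -/
def IS2 (d : ℕ) (k : Type*) [Field k] : Fin d → EdgePair d → k :=
  fun r e => if r = ind e then 1 else 0

-- `D_ε(A) = Σ_{Γ ∈ P^{h,cf}_d(K_{2d})} ε(Γ)·M_Γ(A)`.
open scoped Classical in
noncomputable def Deps {d : ℕ} {k : Type*} [Field k]
    (ε : (Fin d → SimpleGraph (Fin (2*d))) → k) (A : Fin d → EdgePair d → k) : k :=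
  ∑ Γ ∈ Finset.univ.filter (fun Γ : Fin d → SimpleGraph (Fin (2*d)) => IsHCFPartition Γ),
    ε Γ * MGamma Γ A

theorem card_ind_fiber {d : ℕ} (a : Fin d) :
    (Finset.univ.filter (fun e : EdgePair d => ind e = a)).card = 2 * d - 1 := by
  have ha := a.isLt
  have h1 : ((Finset.univ : Finset (Fin (2*d))).erase ⟨2 * a + 1, by omega⟩).card = 2 * d - 1 := by
    rw [Finset.card_erase_of_mem (Finset.mem_univ _)]; simp
  rw [← h1]
  refine Finset.card_bij
    (fun e _ => if ((e.val.1 : ℕ) + (e.val.2 : ℕ)) % 2 = 0 then e.val.2 else e.val.1) ?_ ?_ ?_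
  · rintro ⟨⟨i, j⟩, hij⟩ he
    replace he : indF i j = a := (Finset.mem_filter.1 he).2
    unfold indF at he
    simp only [Finset.mem_erase, Finset.mem_univ, and_true, ne_eq]
    simp only [Fin.lt_def] at hij
    split_ifs at he ⊢ with h <;> simp only [Fin.ext_iff] at he ⊢ <;> omega
  · rintro ⟨⟨i, j⟩, hij⟩ he ⟨⟨i2, j2⟩, hij2⟩ he2 heq
    replace he : indF i j = a := (Finset.mem_filter.1 he).2
    replace he2 : indF i2 j2 = a := (Finset.mem_filter.1 he2).2
    unfold indF at he he2
    simp only [Fin.lt_def] at hij hij2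
    simp only [Subtype.mk.injEq, Prod.mk.injEq]
    simp only at heq
    split_ifs at he he2 heq with h h2 h2 <;> simp only [Fin.ext_iff] at he he2 heq ⊢ <;> omega
  · intro v hv
    simp only [Finset.mem_erase, Finset.mem_univ, and_true, ne_eq, Fin.ext_iff] at hv
    have hvl := v.isLt
    have key : ∀ (i j : Fin (2*d)) (hij : i < j), indF i j = a →
        (if ((i : ℕ) + (j : ℕ)) % 2 = 0 then j else i) = v →
        ∃ (e : EdgePair d) (_ : e ∈ Finset.univ.filter (fun e : EdgePair d => ind e = a)),
          (if ((e.val.1 : ℕ) + (e.val.2 : ℕ)) % 2 = 0 then e.val.2 else e.val.1) = v := by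
      intro i j hij h1 h2
      exact ⟨⟨(i, j), hij⟩, Finset.mem_filter.2 ⟨Finset.mem_univ _, h1⟩, h2⟩
    rcases Nat.lt_or_ge (2 * a) v with h | h <;> rcases Nat.mod_two_eq_zero_or_one v with hp | hp
    · refine key ⟨2 * a, by omega⟩ v (by rw [Fin.lt_def]; exact h) ?_ ?_
      · rw [indF, if_pos (by simp only; omega), Fin.ext_iff]; simp only; omega
      · rw [if_pos (by simp only; omega)]
    · refine key ⟨2 * a + 1, by omega⟩ v (by rw [Fin.lt_def]; simp only; omega) ?_ ?_
      · rw [indF, if_pos (by simp only; omega), Fin.ext_iff]; simp only; omega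
      · rw [if_pos (by simp only; omega)]
    · refine key v ⟨2 * a + 1, by omega⟩ (by rw [Fin.lt_def]; simp only; omega) ?_ ?_
      · rw [indF, if_neg (by simp only; omega), Fin.ext_iff]; simp only; omega
      · rw [if_neg (by simp only; omega)]
    · refine key v ⟨2 * a, by omega⟩ (by rw [Fin.lt_def]; simp only; omega) ?_ ?_
      · rw [indF, if_neg (by simp only; omega), Fin.ext_iff]; simp only; omega
      · rw [if_neg (by simp only; omega)]

theorem exists_color {d : ℕ} {Γ : Fin d → SimpleGraph (Fin (2*d))} (h : IsEdgePartition Γ) :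
    ∃ c : EdgePair d → Fin d, ∀ a e, (Γ a).Adj e.val.1 e.val.2 ↔ a = c e := by
  have h1 : ∀ e : EdgePair d, ∃ a, (Γ a).Adj e.val.1 e.val.2 := by
    intro e
    have : s(e.val.1, e.val.2) ∈ ⋃ a : Fin d, (Γ a).edgeSet := by
      rw [h.2, SimpleGraph.mem_edgeSet, SimpleGraph.top_adj]
      exact e.prop.ne
    simpa using this
  choose c hc using h1
  refine ⟨c, fun a e => ⟨fun hae => ?_, fun hae => hae ▸ hc e⟩⟩
  by_contra hne
  exact Set.disjoint_left.1 (h.1 a (c e) hne) ((SimpleGraph.mem_edgeSet _).2 hae)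
    ((SimpleGraph.mem_edgeSet _).2 (hc e))

theorem color_ncard {d : ℕ} {Γ : Fin d → SimpleGraph (Fin (2*d))} {c : EdgePair d → Fin d}
    (hc : ∀ a e, (Γ a).Adj e.val.1 e.val.2 ↔ a = c e) (a : Fin d) :
    (Γ a).edgeSet.ncard = (Finset.univ.filter (fun e : EdgePair d => c e = a)).card := by
  rw [← Set.ncard_coe_finset]
  symm
  refine Set.ncard_congr (fun e _ => s(e.val.1, e.val.2)) ?_ ?_ ?_
  · intro e he
    have he : c e = a := by simpa using he
    exact (hc a e).2 he.symm
  · rintro ⟨⟨i, j⟩, hij⟩ ⟨⟨i2, j2⟩, hij2⟩ _ _ heq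
    simp only [Sym2.eq_iff] at heq
    simp only at hij hij2
    rcases heq with ⟨h1, h2⟩ | ⟨h1, h2⟩
    · subst h1 h2; rfl
    · subst h1 h2; exact absurd hij (not_lt_of_gt hij2)
  · intro b
    induction b using Sym2.ind with
    | _ x y =>
      intro hb
      rw [SimpleGraph.mem_edgeSet] at hb
      rcases lt_or_gt_of_ne hb.ne with h | h
      · exact ⟨⟨(x, y), h⟩, by simpa using ((hc a ⟨(x, y), h⟩).1 hb).symm, rfl⟩
      · exact ⟨⟨(y, x), h⟩, by simpa using ((hc a ⟨(y, x), h⟩).1 hb.symm).symm, Sym2.eq_swap⟩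

theorem MGamma_color {d : ℕ} {k : Type*} [Field k] {Γ : Fin d → SimpleGraph (Fin (2*d))}
    {c : EdgePair d → Fin d} (hc : ∀ a e, (Γ a).Adj e.val.1 e.val.2 ↔ a = c e)
    (A : Fin d → EdgePair d → k) : MGamma Γ A = ∏ e : EdgePair d, A (c e) e := by
  classical
  unfold MGamma
  rw [Finset.prod_comm]
  refine Finset.prod_congr rfl fun e _ => ?_
  simp only [hc]
  simp

theorem sum_fiber {d n : ℕ} (c : EdgePair d → Fin d)
    (h : ∀ a, (Finset.univ.filter (fun e : EdgePair d => c e = a)).card = n) :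
    ∑ e, (c e : ℕ) = ∑ a : Fin d, n * (a : ℕ) := by
  rw [← Finset.sum_fiberwise_of_maps_to (s := Finset.univ) (t := Finset.univ) (g := c)
    (fun _ _ => Finset.mem_univ _)]
  refine Finset.sum_congr rfl fun a _ => ?_
  rw [← h a]
  exact Finset.sum_eq_card_nsmul fun e he => by rw [(Finset.mem_filter.1 he).2]

theorem card_fiber {d n : ℕ} (c : EdgePair d → Fin d)
    (h : ∀ a, (Finset.univ.filter (fun e : EdgePair d => c e = a)).card = n) :
    Fintype.card (EdgePair d) = d * n := by
  rw [← Finset.card_univ, Finset.card_eq_sum_card_fiberwise (f := c) (t := Finset.univ)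
    (fun _ _ => Finset.mem_coe.2 (Finset.mem_univ _))]
  simp [h]

/-- For any ε : P^{h,cf}_d(K_{2d}) → k and every S²-lower triangular A,
D_ε(A) = D_ε(I^{S²}_d) · (product of the S²-diagonal of A). -/
theorem Deps_lower_triangular (k : Type*) [Field k] (d : ℕ) (hd : 1 ≤ d)
    (ε : (Fin d → SimpleGraph (Fin (2*d))) → k)
    (A : Fin d → EdgePair d → k) (hA : S2LowerTriangular A) :
    Deps ε A = Deps ε (IS2 d k) * ∏ e : EdgePair d, A (ind e) e := by
  classical
  unfold Deps
  rw [Finset.sum_mul]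
  refine Finset.sum_congr rfl fun Γ hΓ => ?_
  have hP : IsHCFPartition Γ := (Finset.mem_filter.1 hΓ).2
  obtain ⟨c, hc⟩ := exists_color hP.1
  rw [mul_assoc, MGamma_color hc, MGamma_color hc]
  congr 1
  by_cases hci : c = ind
  · subst hci; simp [IS2]
  have hne : ∃ e, c e ≠ ind e := by
    by_contra hcon
    push Not at hcon
    exact hci (funext hcon)
  obtain ⟨e₀, he₀⟩ := hne
  have hz : ∏ e : EdgePair d, IS2 d k (c e) e = 0 :=
    Finset.prod_eq_zero (Finset.mem_univ e₀) (by simp [IS2, he₀])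
  rw [hz, zero_mul]
  have hlt : ∃ e, c e < ind e := by
    by_contra hcon
    push Not at hcon
    have hn : ∀ a, (Finset.univ.filter (fun e : EdgePair d => c e = a)).card
        = (Γ ⟨0, hd⟩).edgeSet.ncard := by
      intro a
      rw [← color_ncard hc a]
      exact hP.2.1 _ _
    have h1 := card_fiber c hn
    have h2 := card_fiber (d := d) ind card_ind_fiber
    have h3 : (Γ ⟨0, hd⟩).edgeSet.ncard = 2 * d - 1 :=
      Nat.eq_of_mul_eq_mul_left hd (h1.symm.trans h2)
    have h4 := sum_fiber c hn
    have h5 := sum_fiber (d := d) ind card_ind_fiber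
    rw [h3] at h4
    have h6 : ∑ e : EdgePair d, (ind e : ℕ) < ∑ e : EdgePair d, (c e : ℕ) :=
      Finset.sum_lt_sum (fun e _ => hcon e)
        ⟨e₀, Finset.mem_univ _, lt_of_le_of_ne (hcon e₀) (fun hh => he₀ (Fin.ext hh.symm))⟩
    omega
  obtain ⟨e, he⟩ := hlt
  exact Finset.prod_eq_zero (Finset.mem_univ e) (hA _ _ he)
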